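/- Let w be a bounded weight structure on a triangulated category C, let w' be a weight structure on a triangulated category C', and let F : C → C' be an exact (triangulated) functor. Then F is weight-exact (i.e., F(C_{w≤0}) ⊆ C'_{w'≤0} and F(C_{w≥0}) ⊆ C'_{w'≥0}) if and only if F(C_{w=0}) ⊆ C'_{w'=0}. -/

import Mathlib

/-!
An object `X` in `C_{w≥m} ∩ C_{w≤n}` is an iterated extension of objects of weights `m, …, n`:
in a weight decomposition `A → X → B → A[1]` with `A ∈ C_{w≤m}` and `B ∈ C_{w≥m+1}`, the object `A`
is an extension of `X` by `B[-1]`, hence of weight `m`, and `B` is an extension of `A[1]` by `X`,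
hence in `C_{w≥m+1} ∩ C_{w≤n}`. This uses that both classes of a weight structure are
extension-closed, which holds because each is the orthogonal of the other: a weight decomposition
with a vanishing map splits.

If `F` preserves the hearts, it sends objects of weight `i` to objects of weight `i`, and as
`C'_{w'≤0}` and `C'_{w'≥0}` are extension-closed, `F` sends iterated extensions of objects of
weights `≤ 0` into `C'_{w'≤0}` and iterated extensions of objects of weights `≥ 0` into
`C'_{w'≥0}`. By boundedness these exhaust `C_{w≤0}` and `C_{w≥0}`.
-/

open CategoryTheory CategoryTheory.Limits CategoryTheory.Pretriangulated

namespace CWH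

/-- `X` is a retract of `Y`. -/
def IsRetract {C : Type*} [Category C] (X Y : C) : Prop :=
  ∃ (i : X ⟶ Y) (r : Y ⟶ X), i ≫ r = 𝟙 X

/-- The Karoubi-closure of a class of objects: all retracts of its objects. -/
def retractClosure {C : Type*} [Category C] (S : Set C) : Set C :=
  {X : C | ∃ Y ∈ S, IsRetract X Y}

variable (C : Type*) [Category C] [HasZeroObject C] [HasShift C ℤ]
  [Preadditive C] [∀ n : ℤ, (shiftFunctor C n).Additive] [Pretriangulated C]

/-- A weight structure on a (pre)triangulated category (homological convention):
a pair of retract-closed classes `LE = C_{w≤0}` and `GE = C_{w≥0}` such that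
`C_{w≤0} ⊆ C_{w≤0}[1]`, `C_{w≥0}[1] ⊆ C_{w≥0}`, `Hom(C_{w≤0}, C_{w≥0}[1]) = 0`,
and every object admits a weight decomposition. -/
structure WeightStructure where
  LE : Set C
  GE : Set C
  retract_LE : ∀ ⦃X Y : C⦄, IsRetract X Y → Y ∈ LE → X ∈ LE
  retract_GE : ∀ ⦃X Y : C⦄, IsRetract X Y → Y ∈ GE → X ∈ GE
  shift_LE : ∀ ⦃X : C⦄, X ∈ LE → X⟦(-1 : ℤ)⟧ ∈ LE
  shift_GE : ∀ ⦃X : C⦄, X ∈ GE → X⟦(1 : ℤ)⟧ ∈ GE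
  orthogonal : ∀ ⦃X Y : C⦄, X ∈ LE → Y ∈ GE → ∀ f : X ⟶ Y⟦(1 : ℤ)⟧, f = 0
  decomp : ∀ M : C, ∃ (X Y : C) (f : X ⟶ M) (g : M ⟶ Y) (h : Y ⟶ X⟦(1 : ℤ)⟧),
    Triangle.mk f g h ∈ (distTriang C) ∧ X ∈ LE ∧ Y⟦(-1 : ℤ)⟧ ∈ GE

variable {C}

namespace WeightStructure

variable (w : WeightStructure C)

/-- `C_{w≤i} = C_{w≤0}[i]`. -/
def le (i : ℤ) : Set C := {X : C | X⟦(-i)⟧ ∈ w.LE}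

/-- `C_{w≥i} = C_{w≥0}[i]`. -/
def ge (i : ℤ) : Set C := {X : C | X⟦(-i)⟧ ∈ w.GE}

/-- `C_{w=i} = C_{w≤i} ∩ C_{w≥i}`. -/
def eqw (i : ℤ) : Set C := w.le i ∩ w.ge i

/-- `w` is bounded if every object lies in some `C_{w≤i}` and in some `C_{w≥i}`. -/
def IsBounded : Prop := ∀ X : C, (∃ i : ℤ, X ∈ w.le i) ∧ (∃ i : ℤ, X ∈ w.ge i)

end WeightStructure

/-- The extension-closure of a class `S` of objects: the smallest class containing
the zero objects and `S` and closed under extensions (distinguished triangles). -/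
inductive ExtClosure (S : Set C) : C → Prop
  | zero (X : C) : IsZero X → ExtClosure S X
  | of (X : C) : X ∈ S → ExtClosure S X
  | ext {A E B : C} (f : A ⟶ E) (g : E ⟶ B) (h : B ⟶ A⟦(1 : ℤ)⟧) :
      Triangle.mk f g h ∈ (distTriang C) → ExtClosure S A → ExtClosure S B → ExtClosure S E

/-- The smallest full Karoubi-closed (strict) triangulated subcategory containing `S`:
closure under zero objects, shifts, cones and retracts. -/
inductive TriangClosure (S : Set C) : C → Prop
  | of (X : C) : X ∈ S → TriangClosure S X
  | zero (X : C) : IsZero X → TriangClosure S X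
  | shift (X : C) (n : ℤ) : TriangClosure S X → TriangClosure S (X⟦n⟧)
  | ext {X Y Z : C} (f : X ⟶ Y) (g : Y ⟶ Z) (h : Z ⟶ X⟦(1 : ℤ)⟧) :
      Triangle.mk f g h ∈ (distTriang C) → TriangClosure S X → TriangClosure S Y →
      TriangClosure S Z
  | retract (X Y : C) : IsRetract X Y → TriangClosure S Y → TriangClosure S X

/-- A (strict) full triangulated subcategory, given by its class of objects:
it contains the zero objects and is closed under shifts and under the
two-out-of-three property for distinguished triangles. -/
structure IsTriangulatedSub (P : Set C) : Prop where
  zero : ∀ X : C, IsZero X → X ∈ P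
  shift : ∀ X ∈ P, ∀ n : ℤ, X⟦n⟧ ∈ P
  ext₂ : ∀ ⦃X Y Z : C⦄ (f : X ⟶ Y) (g : Y ⟶ Z) (h : Z ⟶ X⟦(1 : ℤ)⟧),
    Triangle.mk f g h ∈ (distTriang C) → X ∈ P → Z ∈ P → Y ∈ P
  ext₃ : ∀ ⦃X Y Z : C⦄ (f : X ⟶ Y) (g : Y ⟶ Z) (h : Z ⟶ X⟦(1 : ℤ)⟧),
    Triangle.mk f g h ∈ (distTriang C) → X ∈ P → Y ∈ P → Z ∈ P
  ext₁ : ∀ ⦃X Y Z : C⦄ (f : X ⟶ Y) (g : Y ⟶ Z) (h : Z ⟶ X⟦(1 : ℤ)⟧),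
    Triangle.mk f g h ∈ (distTriang C) → Y ∈ P → Z ∈ P → X ∈ P

/-- A weight structure on the full (triangulated) subcategory of `C` whose objects
are given by the class `P`; retracts are taken inside `P` and the distinguished
triangles of the subcategory are the distinguished triangles of `C` with vertices
in `P`. -/
structure IsWeightStructureOn (P LEs GEs : Set C) : Prop where
  le_sub : LEs ⊆ P
  ge_sub : GEs ⊆ P
  retract_le : ∀ ⦃X Y : C⦄, X ∈ P → IsRetract X Y → Y ∈ LEs → X ∈ LEs
  retract_ge : ∀ ⦃X Y : C⦄, X ∈ P → IsRetract X Y → Y ∈ GEs → X ∈ GEs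
  shift_le : ∀ ⦃X : C⦄, X ∈ LEs → X⟦(-1 : ℤ)⟧ ∈ LEs
  shift_ge : ∀ ⦃X : C⦄, X ∈ GEs → X⟦(1 : ℤ)⟧ ∈ GEs
  orthogonal : ∀ ⦃X Y : C⦄, X ∈ LEs → Y ∈ GEs → ∀ f : X ⟶ Y⟦(1 : ℤ)⟧, f = 0
  decomp : ∀ M ∈ P, ∃ (X Y : C) (f : X ⟶ M) (g : M ⟶ Y) (h : Y ⟶ X⟦(1 : ℤ)⟧),
    Triangle.mk f g h ∈ (distTriang C) ∧ X ∈ LEs ∧ Y⟦(-1 : ℤ)⟧ ∈ GEs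

/-- The class of morphisms of `C` whose cone lies in `P`; the Verdier quotient
`C/P` is the localization of `C` at this class. -/
def coneIn (P : Set C) : MorphismProperty C := fun X Y f =>
  ∃ (Z : C) (g : Y ⟶ Z) (h : Z ⟶ X⟦(1 : ℤ)⟧),
    Triangle.mk f g h ∈ (distTriang C) ∧ Z ∈ P

/-- A weight Postnikov tower for `M`: choices of weight truncations `trunc l = w_{≤l}M`
(with cones `conePt l = w_{≥l+1}M`), of the connecting morphisms between them that are
compatible with `𝟙 M`, and of the distinguished triangles
`w_{≤l}M → w_{≤l+1}M → M^{-l-1}[l+1] → (w_{≤l}M)[1]`; the objects `termAt l = M^{-l}`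
lie in the heart and are the terms of the associated weight complex `t(M)`, whose
boundary morphisms `bd (l+1) l : M^{-l-1} → M^{-l}` are obtained by composing the
connecting morphisms of two consecutive triangles. -/
structure WeightPostnikovTower (w : WeightStructure C) (M : C) where
  trunc : ℤ → C
  trunc_mem : ∀ l : ℤ, trunc l ∈ w.le l
  ι : ∀ l : ℤ, trunc l ⟶ M
  conePt : ℤ → C
  cone_mem : ∀ l : ℤ, conePt l ∈ w.ge (l + 1)
  coneπ : ∀ l : ℤ, M ⟶ conePt l
  coneδ : ∀ l : ℤ, conePt l ⟶ (trunc l)⟦(1 : ℤ)⟧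
  trunc_dist : ∀ l : ℤ, Triangle.mk (ι l) (coneπ l) (coneδ l) ∈ (distTriang C)
  step : ∀ l : ℤ, trunc l ⟶ trunc (l + 1)
  step_ι : ∀ l : ℤ, step l ≫ ι (l + 1) = ι l
  termAt : ℤ → C
  term_mem : ∀ l : ℤ, termAt l ∈ w.LE ∧ termAt l ∈ w.GE
  sπ : ∀ l : ℤ, trunc l ⟶ (termAt l)⟦l⟧
  sδ : ∀ l : ℤ, (termAt (l + 1))⟦(l + 1 : ℤ)⟧ ⟶ (trunc l)⟦(1 : ℤ)⟧
  step_dist : ∀ l : ℤ, Triangle.mk (step l) (sπ (l + 1)) (sδ l) ∈ (distTriang C)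
  bd : ∀ i j : ℤ, termAt i ⟶ termAt j
  bd_shape : ∀ i j : ℤ, j + 1 ≠ i → bd i j = 0
  bd_eq : ∀ l : ℤ,
    (shiftFunctor C (l + 1)).map (bd (l + 1) l) ≫
      (shiftFunctorAdd' C l 1 (l + 1) rfl).hom.app (termAt l) =
    sδ l ≫ (shiftFunctor C (1 : ℤ)).map (sπ l)

/-- The differential of the weight complex associated to a weight Postnikov tower,
in "homological" indexing: the `l`-th term `termAt l` is the `(-l)`-th term `M^{-l}`
of the weight complex. -/
def towerD {w : WeightStructure C} {M : C} (T : WeightPostnikovTower w M) :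
    ∀ l : ℤ, T.termAt (l + 1) ⟶ T.termAt l :=
  fun l => T.bd (l + 1) l

section Complexes

variable {X Y : ℤ → C}

/-- A morphism of ("homologically indexed") complexes. -/
def IsChainMapDown (X Y : ℤ → C) (dX : ∀ l : ℤ, X (l + 1) ⟶ X l)
    (dY : ∀ l : ℤ, Y (l + 1) ⟶ Y l) (f : ∀ l : ℤ, X l ⟶ Y l) : Prop :=
  ∀ l : ℤ, f (l + 1) ≫ dY l = dX l ≫ f l

/-- Two families of morphisms of complexes are chain homotopic. -/
def ChainHomotopicDown (X Y : ℤ → C) (dX : ∀ l : ℤ, X (l + 1) ⟶ X l)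
    (dY : ∀ l : ℤ, Y (l + 1) ⟶ Y l) (f g : ∀ l : ℤ, X l ⟶ Y l) : Prop :=
  ∃ s : ∀ l : ℤ, X l ⟶ Y (l + 1),
    ∀ l : ℤ, f (l + 1) - g (l + 1) = s (l + 1) ≫ dY (l + 1) + dX l ≫ s l

/-- Two complexes are homotopy equivalent (i.e., isomorphic in the homotopy category). -/
def HomotopyEquivDown (X Y : ℤ → C) (dX : ∀ l : ℤ, X (l + 1) ⟶ X l)
    (dY : ∀ l : ℤ, Y (l + 1) ⟶ Y l) : Prop :=
  ∃ (f : ∀ l : ℤ, X l ⟶ Y l) (g : ∀ l : ℤ, Y l ⟶ X l),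
    IsChainMapDown X Y dX dY f ∧ IsChainMapDown Y X dY dX g ∧
    ChainHomotopicDown X X dX dX (fun l => f l ≫ g l) (fun l => 𝟙 (X l)) ∧
    ChainHomotopicDown Y Y dY dY (fun l => g l ≫ f l) (fun l => 𝟙 (Y l))

end Complexes

theorem mem_distTriang_of_iso₂ {T : Triangle C} (hT : T ∈ distTriang C) {M : C} (e : T.obj₂ ≅ M) :
    Triangle.mk (T.mor₁ ≫ e.hom) (e.inv ≫ T.mor₂) T.mor₃ ∈ distTriang C :=
  isomorphic_distinguished T hT _ (Triangle.isoMk _ _ (Iso.refl T.obj₁) e.symm (Iso.refl T.obj₃)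
    (show (T.mor₁ ≫ e.hom) ≫ e.inv = 𝟙 T.obj₁ ≫ T.mor₁ by simp)
    (show (e.inv ≫ T.mor₂) ≫ 𝟙 T.obj₃ = e.inv ≫ T.mor₂ by simp)
    (show T.mor₃ ≫ (𝟙 T.obj₁)⟦(1 : ℤ)⟧' = 𝟙 T.obj₃ ≫ T.mor₃ by simp))

namespace ExtClosure

theorem mono {S T : Set C} (hST : S ⊆ T) {X : C} (hX : ExtClosure S X) : ExtClosure T X := by
  induction hX with
  | zero X hX => exact zero X hX
  | of X hX => exact of X (hST hX)
  | ext f g h hT _ _ hA hB => exact ext f g h hT hA hB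

theorem map_mem {C' : Type*} [Category C'] [HasZeroObject C'] [HasShift C' ℤ]
    [Preadditive C'] [∀ n : ℤ, (shiftFunctor C' n).Additive] [Pretriangulated C']
    {S : Set C} {P : Set C'} (F : C ⥤ C') [F.CommShift ℤ] [F.IsTriangulated]
    (hzero : ∀ Z : C', IsZero Z → Z ∈ P)
    (hext : ∀ T ∈ distTriang C', T.obj₁ ∈ P → T.obj₃ ∈ P → T.obj₂ ∈ P)
    (hS : ∀ X ∈ S, F.obj X ∈ P) {X : C} (hX : ExtClosure S X) : F.obj X ∈ P := by
  induction hX with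
  | zero X hX => exact hzero _ (F.map_isZero hX)
  | of X hX => exact hS X hX
  | ext f g h hT _ _ hA hB => exact hext _ (F.map_distinguished _ hT) hA hB

end ExtClosure

namespace WeightStructure

variable (w : WeightStructure C)

theorem mem_LE_congr {X Y : C} (e : X ≅ Y) : X ∈ w.LE ↔ Y ∈ w.LE :=
  ⟨w.retract_LE ⟨e.inv, e.hom, e.inv_hom_id⟩, w.retract_LE ⟨e.hom, e.inv, e.hom_inv_id⟩⟩

theorem mem_GE_congr {X Y : C} (e : X ≅ Y) : X ∈ w.GE ↔ Y ∈ w.GE :=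
  ⟨w.retract_GE ⟨e.inv, e.hom, e.inv_hom_id⟩, w.retract_GE ⟨e.hom, e.inv, e.hom_inv_id⟩⟩

theorem mem_LE_iff_forall_hom_eq_zero {X : C} :
    X ∈ w.LE ↔ ∀ Y ∈ w.GE, ∀ f : X ⟶ Y⟦(1 : ℤ)⟧, f = 0 := by
  refine ⟨fun hX _ hY => w.orthogonal hX hY, fun hX => ?_⟩
  obtain ⟨A, B, i, p, _, hT, hA, hB⟩ := w.decomp X
  have hp : p = 0 := by
    rw [← cancel_mono (shiftNegShift B (1 : ℤ)).inv, zero_comp]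
    exact hX _ hB _
  obtain ⟨s, hs⟩ : ∃ s : X ⟶ A, 𝟙 X = s ≫ i :=
    Triangle.coyoneda_exact₂ _ hT (𝟙 X) ((Category.id_comp p).trans hp)
  exact w.retract_LE ⟨s, i, hs.symm⟩ hA

theorem mem_GE_iff_forall_hom_eq_zero {Y : C} :
    Y ∈ w.GE ↔ ∀ X ∈ w.LE, ∀ f : X ⟶ Y⟦(1 : ℤ)⟧, f = 0 := by
  refine ⟨fun hY _ hX => w.orthogonal hX hY, fun hY => ?_⟩
  obtain ⟨A, B, i, p, _, hT, hA, hB⟩ := w.decomp (Y⟦(1 : ℤ)⟧)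
  obtain ⟨r, hr⟩ : ∃ r : B ⟶ Y⟦(1 : ℤ)⟧, 𝟙 (Y⟦(1 : ℤ)⟧) = p ≫ r :=
    Triangle.yoneda_exact₂ _ hT (𝟙 (Y⟦(1 : ℤ)⟧)) ((Category.comp_id i).trans (hY A hA i))
  refine (w.mem_GE_congr (shiftShiftNeg Y (1 : ℤ))).1
    (w.retract_GE ⟨p⟦(-1 : ℤ)⟧', r⟦(-1 : ℤ)⟧', ?_⟩ hB)
  rw [← Functor.map_comp, ← hr, CategoryTheory.Functor.map_id]

theorem mem_LE_of_isZero {X : C} (hX : IsZero X) : X ∈ w.LE :=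
  w.mem_LE_iff_forall_hom_eq_zero.2 fun _ _ f => hX.eq_of_src f 0

theorem mem_GE_of_isZero {X : C} (hX : IsZero X) : X ∈ w.GE :=
  w.mem_GE_iff_forall_hom_eq_zero.2 fun _ _ f =>
    ((shiftFunctor C (1 : ℤ)).map_isZero hX).eq_of_tgt f 0

theorem mem_LE_of_distTriang (T : Triangle C) (hT : T ∈ distTriang C)
    (h₁ : T.obj₁ ∈ w.LE) (h₃ : T.obj₃ ∈ w.LE) : T.obj₂ ∈ w.LE := by
  refine w.mem_LE_iff_forall_hom_eq_zero.2 fun Y hY f => ?_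
  obtain ⟨g, rfl⟩ := Triangle.yoneda_exact₂ _ hT f (w.orthogonal h₁ hY _)
  rw [w.orthogonal h₃ hY g, comp_zero]

theorem mem_GE_of_distTriang (T : Triangle C) (hT : T ∈ distTriang C)
    (h₁ : T.obj₁ ∈ w.GE) (h₃ : T.obj₃ ∈ w.GE) : T.obj₂ ∈ w.GE := by
  refine w.mem_GE_iff_forall_hom_eq_zero.2 fun X hX f => ?_
  obtain ⟨g, hg⟩ := Triangle.coyoneda_exact₂ _ (Triangle.shift_distinguished T hT 1) f
    (w.orthogonal hX h₃ _)
  rw [hg, w.orthogonal hX h₁ g]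
  exact zero_comp

theorem mem_le_of_distTriang (T : Triangle C) (hT : T ∈ distTriang C) {i : ℤ}
    (h₁ : T.obj₁ ∈ w.le i) (h₃ : T.obj₃ ∈ w.le i) : T.obj₂ ∈ w.le i :=
  w.mem_LE_of_distTriang _ (Triangle.shift_distinguished T hT (-i)) h₁ h₃

theorem mem_ge_of_distTriang (T : Triangle C) (hT : T ∈ distTriang C) {i : ℤ}
    (h₁ : T.obj₁ ∈ w.ge i) (h₃ : T.obj₃ ∈ w.ge i) : T.obj₂ ∈ w.ge i :=
  w.mem_GE_of_distTriang _ (Triangle.shift_distinguished T hT (-i)) h₁ h₃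

theorem le_zero : w.le 0 = w.LE :=
  Set.ext fun X => w.mem_LE_congr ((shiftFunctorZero' C (-0 : ℤ) neg_zero).app X)

theorem ge_zero : w.ge 0 = w.GE :=
  Set.ext fun X => w.mem_GE_congr ((shiftFunctorZero' C (-0 : ℤ) neg_zero).app X)

theorem shift_mem_le_iff {X : C} {a i j : ℤ} (h : a + i = j) : X⟦a⟧ ∈ w.le j ↔ X ∈ w.le i :=
  w.mem_LE_congr ((shiftFunctorAdd' C a (-j) (-i) (by lia)).symm.app X)

theorem shift_mem_ge_iff {X : C} {a i j : ℤ} (h : a + i = j) : X⟦a⟧ ∈ w.ge j ↔ X ∈ w.ge i :=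
  w.mem_GE_congr ((shiftFunctorAdd' C a (-j) (-i) (by lia)).symm.app X)

theorem le_monotone : Monotone w.le :=
  monotone_int_of_le_succ fun i X hX =>
    (w.mem_LE_congr ((shiftFunctorAdd' C (-i) (-1) (-(i + 1)) (by lia)).symm.app X)).1
      (w.shift_LE hX)

theorem ge_antitone : Antitone w.ge :=
  antitone_int_of_succ_le fun i X hX =>
    (w.mem_GE_congr ((shiftFunctorAdd' C (-(i + 1)) 1 (-i) (by lia)).symm.app X)).1
      (w.shift_GE hX)

theorem exists_triangle_le_ge (M : C) {i j : ℤ} (hij : i + 1 = j) :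
    ∃ (A B : C) (f : A ⟶ M) (g : M ⟶ B) (h : B ⟶ A⟦(1 : ℤ)⟧),
      Triangle.mk f g h ∈ distTriang C ∧ A ∈ w.le i ∧ B ∈ w.ge j := by
  obtain ⟨A, B, f, g, h, hT, hA, hB⟩ := w.decomp (M⟦-i⟧)
  refine ⟨_, _, _, _, _, mem_distTriang_of_iso₂ (Triangle.shift_distinguished _ hT i)
    (shiftNegShift M i), ?_, ?_⟩
  · exact (w.shift_mem_le_iff (add_zero i)).2 (w.le_zero.ge hA)
  · exact (w.shift_mem_ge_iff hij).2 hB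

theorem le_inter_ge_subset_extClosure {m n : ℤ} (hmn : m ≤ n) :
    w.le n ∩ w.ge m ⊆ {X | ExtClosure (⋃ i ∈ Set.Icc m n, w.eqw i) X} := by
  induction m, hmn using Int.leInductionDown with
  | base => exact fun X hX => .of X (Set.mem_biUnion ⟨le_rfl, le_rfl⟩ hX)
  | pred m hmn ih =>
    rintro X ⟨hXn, hXm⟩
    obtain ⟨A, B, f, g, h, hT, hA, hB⟩ := w.exists_triangle_le_ge X (sub_add_cancel m 1)
    have hA' : A ∈ w.ge (m - 1) := w.mem_ge_of_distTriang _ (inv_rot_of_distTriang _ hT)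
      ((w.shift_mem_ge_iff (neg_add_eq_sub 1 m)).2 hB) hXm
    have hB' : B ∈ w.le n := w.mem_le_of_distTriang _ (rot_of_distTriang _ hT) hXn
      (w.le_monotone hmn ((w.shift_mem_le_iff (add_sub_cancel 1 m)).2 hA))
    refine .ext f g h hT (.of A (Set.mem_biUnion ⟨le_rfl, by lia⟩ ⟨hA, hA'⟩))
      ((ih ⟨hB', hB⟩).mono ?_)
    exact Set.biUnion_mono (Set.Icc_subset_Icc_left (by lia)) fun _ _ => le_rfl

section Functor

variable {C' : Type*} [Category C'] [HasZeroObject C'] [HasShift C' ℤ]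
  [Preadditive C'] [∀ n : ℤ, (shiftFunctor C' n).Additive] [Pretriangulated C']
  (w' : WeightStructure C') {F : C ⥤ C'} [F.CommShift ℤ] [F.IsTriangulated]

theorem obj_mem_LE_of_heart (hF : ∀ X ∈ w.LE ∩ w.GE, F.obj X ∈ w'.LE) {X : C} {m : ℤ}
    (hX : X ∈ w.LE) (hXm : X ∈ w.ge m) : F.obj X ∈ w'.LE := by
  have hX' : ExtClosure (⋃ i ∈ Set.Icc (min m 0) 0, w.eqw i) X :=
    w.le_inter_ge_subset_extClosure (min_le_right m 0)
      ⟨w.le_zero.ge hX, w.ge_antitone (min_le_left m 0) hXm⟩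
  refine hX'.map_mem F (fun _ => w'.mem_LE_of_isZero) w'.mem_LE_of_distTriang
    (Set.iUnion₂_subset fun i hi Y hY => ?_)
  have hFY : F.obj Y ∈ w'.le i := (w'.mem_LE_congr ((F.commShiftIso (-i)).app Y)).1 (hF _ hY)
  exact w'.le_zero.le (w'.le_monotone hi.2 hFY)

theorem obj_mem_GE_of_heart (hF : ∀ X ∈ w.LE ∩ w.GE, F.obj X ∈ w'.GE) {X : C} {n : ℤ}
    (hX : X ∈ w.GE) (hXn : X ∈ w.le n) : F.obj X ∈ w'.GE := by
  have hX' : ExtClosure (⋃ i ∈ Set.Icc 0 (max n 0), w.eqw i) X :=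
    w.le_inter_ge_subset_extClosure (le_max_right n 0)
      ⟨w.le_monotone (le_max_left n 0) hXn, w.ge_zero.ge hX⟩
  refine hX'.map_mem F (fun _ => w'.mem_GE_of_isZero) w'.mem_GE_of_distTriang
    (Set.iUnion₂_subset fun i hi Y hY => ?_)
  have hFY : F.obj Y ∈ w'.ge i := (w'.mem_GE_congr ((F.commShiftIso (-i)).app Y)).1 (hF _ hY)
  exact w'.ge_zero.le (w'.ge_antitone hi.1 hFY)

end Functor

end WeightStructure

/-- an exact functor between (pre)triangulated categories endowed with
weight structures (`w` bounded) is weight-exact if and only if it maps `C_{w=0}`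
into `C'_{w'=0}`. -/
theorem statement4 {C' : Type*} [Category C'] [HasZeroObject C'] [HasShift C' ℤ]
    [Preadditive C'] [∀ n : ℤ, (shiftFunctor C' n).Additive] [Pretriangulated C']
    (w : WeightStructure C) (hw : w.IsBounded) (w' : WeightStructure C')
    (F : C ⥤ C') [F.CommShift ℤ] [F.IsTriangulated] :
    ((∀ X ∈ w.LE, F.obj X ∈ w'.LE) ∧ (∀ X ∈ w.GE, F.obj X ∈ w'.GE)) ↔
      (∀ X ∈ w.LE ∩ w.GE, F.obj X ∈ w'.LE ∩ w'.GE) := by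
  refine ⟨fun h X hX => ⟨h.1 X hX.1, h.2 X hX.2⟩, fun hF => ⟨fun X hX => ?_, fun X hX => ?_⟩⟩
  · obtain ⟨m, hm⟩ := (hw X).2
    exact w.obj_mem_LE_of_heart w' (fun Y hY => (hF Y hY).1) hX hm
  · obtain ⟨n, hn⟩ := (hw X).1
    exact w.obj_mem_GE_of_heart w' (fun Y hY => (hF Y hY).2) hX hn

end CWH
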